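/- Suppose q ≠ 2, or q = 2 and T ∤ M and (T+1) ∤ M. If e_M(Γ) = 1 and Γ is a free A-module of rank r with basis {a_1, …, a_r}, and φ_i : H_Γ(M) → Λ_M is defined by φ_i(σ) = σα_i − α_i where α_i^M = a_i, then the map H_Γ(M) → Λ_M × ⋯ × Λ_M (r copies) given by σ ↦ (φ_1(σ), …, φ_r(σ)) is an A-module (equivalently A/(M)-module) isomorphism. -/

import Mathlib

open Polynomial IntermediateField

set_option synthInstance.maxHeartbeats 1000000
set_option maxHeartbeats 1000000

/-- `ψ` is the Carlitz module: the ring homomorphism `A = 𝔽_q[T] → End_{𝔽_q}(k̄, +)`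
determined by `T ↦ (α ↦ Tα + α^q)` and `c ↦ (α ↦ cα)` for constants `c ∈ 𝔽_q`. -/
def IsCarlitz {Fq : Type} [Field Fq] [Fintype Fq]
    (ψ : Polynomial Fq →+* AddMonoid.End (AlgebraicClosure (RatFunc Fq))) : Prop :=
  (∀ α, ψ X α = algebraMap (RatFunc Fq) (AlgebraicClosure (RatFunc Fq)) RatFunc.X * α
      + α ^ Fintype.card Fq) ∧
  (∀ (c : Fq) (α), ψ (C c) α
      = algebraMap (RatFunc Fq) (AlgebraicClosure (RatFunc Fq)) (RatFunc.C c) * α)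

/-- An automorphism `τ ∈ Gal(E/k)` fixes the `M`-torsion points `Λ_M` pointwise; when
`E ⊇ K = k(Λ_M)` this says exactly `τ ∈ Gal(E/K)`. -/
def FixesTorsion {Fq : Type} [Field Fq] [Fintype Fq]
    (ψ : Polynomial Fq →+* AddMonoid.End (AlgebraicClosure (RatFunc Fq)))
    (M : Polynomial Fq)
    {E : IntermediateField (RatFunc Fq) (AlgebraicClosure (RatFunc Fq))}
    (τ : ↥E ≃ₐ[RatFunc Fq] ↥E) : Prop :=
  ∀ x : ↥E, ψ M (x : AlgebraicClosure (RatFunc Fq)) = 0 → τ x = x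

/-- An automorphism `s ∈ Gal(E/k)` is an extension of `σ_B ∈ Gal(K/k)`, i.e. it acts on
the `M`-torsion points `Λ_M ⊆ E` by `λ ↦ λ^B`. -/
def ExtendsSigma {Fq : Type} [Field Fq] [Fintype Fq]
    (ψ : Polynomial Fq →+* AddMonoid.End (AlgebraicClosure (RatFunc Fq)))
    (M : Polynomial Fq)
    {E : IntermediateField (RatFunc Fq) (AlgebraicClosure (RatFunc Fq))}
    (s : ↥E ≃ₐ[RatFunc Fq] ↥E) (B : Polynomial Fq) : Prop :=
  ∀ x : ↥E, ψ M (x : AlgebraicClosure (RatFunc Fq)) = 0 →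
    ((s x : AlgebraicClosure (RatFunc Fq))) = ψ B (x : AlgebraicClosure (RatFunc Fq))

/-- `c` is the natural `A`-action on `Gal(E/K)`, defined via decompositions: for
`f ≡ f_1 + ⋯ + f_n (mod M)` with all `gcd(f_i, M) = 1` and extensions `s_i` of
`σ_{f_i}`, one has `c f τ = Σ_i s_i ∘ τ ∘ s_i⁻¹`. -/
def IsDecompConjAction {Fq : Type} [Field Fq] [Fintype Fq]
    (ψ : Polynomial Fq →+* AddMonoid.End (AlgebraicClosure (RatFunc Fq)))
    (M : Polynomial Fq)
    {E : IntermediateField (RatFunc Fq) (AlgebraicClosure (RatFunc Fq))}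
    (c : Polynomial Fq → (↥E ≃ₐ[RatFunc Fq] ↥E) → (↥E ≃ₐ[RatFunc Fq] ↥E)) : Prop :=
  ∀ (f : Polynomial Fq) (τ : ↥E ≃ₐ[RatFunc Fq] ↥E), FixesTorsion ψ M τ →
    ∀ (n : ℕ) (g : Fin n → Polynomial Fq), (∀ i, IsCoprime (g i) M) →
      M ∣ (f - ∑ i, g i) →
      ∀ s : Fin n → (↥E ≃ₐ[RatFunc Fq] ↥E), (∀ i, ExtendsSigma ψ M (s i) (g i)) →
        c f τ = (List.ofFn (fun i => s i * τ * (s i)⁻¹)).prod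


namespace CarlitzAux

section basics

variable {F : Type} [Field F] [Fintype F]

/-- The operator `x ↦ T x + x ^ q` on an `F[T]`-algebra. -/
noncomputable def step (F : Type) [Field F] [Fintype F] (R : Type) [CommRing R] [Algebra F R]
    [Algebra F[X] R] [IsScalarTower F F[X] R] : R →ₗ[F] R :=
  LinearMap.mulLeft F (algebraMap F[X] R X) + (FiniteField.frobeniusAlgHom F R).toLinearMap

/-- The Carlitz action on an `F[T]`-algebra. -/
noncomputable def carl (R : Type) [CommRing R] [Algebra F R]
    [Algebra F[X] R] [IsScalarTower F F[X] R] : F[X] →ₐ[F] Module.End F R :=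
  aeval (step F R)

variable {R : Type} [CommRing R] [Algebra F R] [Algebra F[X] R] [IsScalarTower F F[X] R]
variable {R' : Type} [CommRing R'] [Algebra F R'] [Algebra F[X] R'] [IsScalarTower F F[X] R']

lemma step_apply (x : R) : step F R x = algebraMap F[X] R X * x + x ^ Fintype.card F := by
  simp [step]

lemma carl_X (x : R) : carl R (X : F[X]) x = algebraMap F[X] R X * x + x ^ Fintype.card F := by
  simp [carl, step_apply]

lemma carl_C (c : F) (x : R) : carl R (C c) x = algebraMap F R c * x := by
  simp [carl, Module.algebraMap_end_apply, Algebra.smul_def]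

lemma carl_mul (f g : F[X]) (x : R) : carl R (f * g) x = carl R f (carl R g x) := by
  rw [map_mul]; rfl

lemma carl_add (f g : F[X]) (x : R) : carl R (f + g) x = carl R f x + carl R g x := by
  rw [map_add]; rfl

lemma carl_sub (f g : F[X]) (x : R) : carl R (f - g) x = carl R f x - carl R g x := by
  rw [map_sub]; rfl

lemma carl_one (x : R) : carl R (1 : F[X]) x = x := by
  rw [map_one]; rfl

lemma carl_zero (x : R) : carl R (0 : F[X]) x = 0 := by
  rw [map_zero]; rfl

lemma carl_comm (f g : F[X]) (x : R) : carl R f (carl R g x) = carl R g (carl R f x) := by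
  rw [← carl_mul, mul_comm, carl_mul]

lemma carl_sum {ι : Type} (s : Finset ι) (f : ι → F[X]) (x : R) :
    carl R (∑ i ∈ s, f i) x = ∑ i ∈ s, carl R (f i) x := by
  rw [map_sum, LinearMap.sum_apply]

/-- Induction principle for additive statements about the Carlitz action. -/
lemma carl_unique (ψ : F[X] →+* AddMonoid.End R)
    (h1 : ∀ x, ψ X x = algebraMap F[X] R X * x + x ^ Fintype.card F)
    (h2 : ∀ (c : F) x, ψ (C c) x = algebraMap F R c * x) (f : F[X]) (x : R) :
    ψ f x = carl R f x := by
  induction f using Polynomial.induction_on generalizing x with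
  | C a => rw [h2, carl_C]
  | add p q hp hq => rw [map_add, carl_add, ← hp, ← hq]; rfl
  | monomial n a ih =>
    rw [pow_succ, ← mul_assoc, map_mul, carl_mul, ← ih, carl_X, ← h1]; rfl

lemma carl_map (e : R →+* R') (he : ∀ a : F[X], e (algebraMap F[X] R a) = algebraMap F[X] R' a)
    (f : F[X]) (x : R) : e (carl R f x) = carl R' f (e x) := by
  induction f using Polynomial.induction_on generalizing x with
  | C a =>
    rw [carl_C, carl_C, map_mul, IsScalarTower.algebraMap_apply F F[X] R, he,
      ← IsScalarTower.algebraMap_apply F F[X] R']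
  | add p q hp hq => rw [carl_add, carl_add, map_add, hp, hq]
  | monomial n a ih =>
    rw [pow_succ, ← mul_assoc, carl_mul (C a * X ^ n), carl_mul (C a * X ^ n), ih, carl_X, carl_X,
      e.map_add, e.map_mul, e.map_pow, he]

/-- The Carlitz polynomial. -/
noncomputable def cp (N : F[X]) : F[X][X] := carl (F[X][X]) N X

lemma aeval_cp (N : F[X]) (x : R) : aeval x (cp N) = carl R N x := by
  have := carl_map (F := F) (R := F[X][X]) (R' := R) (aeval x : F[X][X] →ₐ[F[X]] R).toRingHom
    (fun a => by simp) N X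
  simpa [cp] using this

lemma cp_X_mul (N : F[X]) : cp (X * N) = C X * cp N + cp N ^ Fintype.card F := by
  rw [cp, carl_mul, carl_X]; rfl

lemma cp_C_mul (c : F) (N : F[X]) : cp (C c * N) = C (C c) * cp N := by
  rw [cp, carl_mul, carl_C]; rfl

lemma cp_add (M N : F[X]) : cp (M + N) = cp M + cp N := carl_add _ _ _

lemma cp_one : cp (1 : F[X]) = X := carl_one _

lemma card_cast (R : Type) [CommRing R] [Algebra F R] : ((Fintype.card F : ℕ) : R) = 0 := by
  have := congrArg (algebraMap F R) (FiniteField.cast_card_eq_zero F)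
  rwa [map_natCast, map_zero] at this

lemma derivative_cp (N : F[X]) : derivative (cp N) = C N := by
  induction N using Polynomial.induction_on with
  | C a =>
    rw [← mul_one (C a), cp_C_mul, cp_one]; simp
  | add p q hp hq => rw [cp_add, derivative_add, hp, hq, C_add]
  | monomial n a ih =>
    rw [pow_succ, ← mul_assoc, mul_comm _ X, cp_X_mul, derivative_add, derivative_mul, ih,
      derivative_pow]
    have : ((Fintype.card F : ℕ) : F[X]) = 0 := card_cast _
    rw [this]
    simp

lemma cp_X_pow (n : ℕ) : (cp (X ^ n : F[X])).Monic ∧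
    (cp (X ^ n : F[X])).natDegree = Fintype.card F ^ n := by
  have hq : 1 < Fintype.card F := Fintype.one_lt_card
  induction n with
  | zero => rw [pow_zero, cp_one]; simp [monic_X]
  | succ n ih =>
    obtain ⟨h1, h2⟩ := ih
    rw [pow_succ, mul_comm, cp_X_mul]
    have hm : (cp (X ^ n : F[X]) ^ Fintype.card F).Monic := h1.pow _
    have hd : (cp (X ^ n : F[X]) ^ Fintype.card F).natDegree = Fintype.card F ^ (n+1) := by
      rw [h1.natDegree_pow, h2]; ring
    have hlt : (C X * cp (X ^ n : F[X])).natDegree <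
        (cp (X ^ n : F[X]) ^ Fintype.card F).natDegree := by
      refine lt_of_le_of_lt (natDegree_C_mul_le _ _) ?_
      rw [hd, h2]
      exact Nat.pow_lt_pow_right hq (Nat.lt_succ_self _)
    constructor
    · exact hm.add_of_right (degree_lt_degree hlt)
    · rw [natDegree_add_eq_right_of_natDegree_lt hlt, hd]

lemma cp_natDegree_le (N : F[X]) : (cp N).natDegree ≤ Fintype.card F ^ N.natDegree ∧
    (cp N).coeff (Fintype.card F ^ N.natDegree) = C (N.leadingCoeff) := by
  have hq : 1 < Fintype.card F := Fintype.one_lt_card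
  have key : ∀ n (N : F[X]), N.natDegree ≤ n → (cp N).natDegree ≤ Fintype.card F ^ n ∧
    (cp N).coeff (Fintype.card F ^ n) = C (N.coeff n) := by
    intro n
    induction n with
    | zero =>
      intro N hN
      rw [eq_C_of_natDegree_le_zero hN, ← mul_one (C _), cp_C_mul, cp_one]
      constructor
      · exact (natDegree_C_mul_le _ _).trans (by simp)
      · simp
    | succ n ih =>
      intro N hN
      have hN' : N = N.eraseLead + (N - N.eraseLead) := by ring
      have hdec : N = (N - C (N.coeff (n+1)) * X ^ (n+1)) + C (N.coeff (n+1)) * X ^ (n+1) := by ring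
      have hdeg : (N - C (N.coeff (n+1)) * X ^ (n+1)).natDegree ≤ n := by
        rw [natDegree_le_iff_coeff_eq_zero]
        intro m hm
        rcases eq_or_lt_of_le (Nat.succ_le_of_lt hm) with h | h
        · subst h; simp
        · rw [coeff_sub, coeff_C_mul, coeff_X_pow, if_neg (by omega),
            coeff_eq_zero_of_natDegree_lt (by omega)]; simp
      obtain ⟨h1, h2⟩ := ih _ hdeg
      obtain ⟨h3, h4⟩ := cp_X_pow (F := F) (n+1)
      have hlt : Fintype.card F ^ n < Fintype.card F ^ (n+1) :=
        Nat.pow_lt_pow_right hq (Nat.lt_succ_self _)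
      have e : cp N = cp (N - C (N.coeff (n+1)) * X ^ (n+1)) +
          C (C (N.coeff (n+1))) * cp (X ^ (n+1)) := by
        conv_lhs => rw [hdec, cp_add, cp_C_mul]
      rw [e]
      constructor
      · refine (natDegree_add_le _ _).trans (max_le (h1.trans hlt.le) ?_)
        exact (natDegree_C_mul_le _ _).trans h4.le
      · rw [coeff_add, coeff_eq_zero_of_natDegree_lt (lt_of_le_of_lt h1 hlt), coeff_C_mul, ← h4,
          h3.coeff_natDegree]; simp
  exact key _ N le_rfl

lemma cp_natDegree {N : F[X]} (hN : N ≠ 0) : (cp N).natDegree = Fintype.card F ^ N.natDegree := by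
  obtain ⟨h1, h2⟩ := cp_natDegree_le N
  refine le_antisymm h1 (le_natDegree_of_ne_zero ?_)
  rw [h2]; simpa using hN

lemma cp_leadingCoeff {N : F[X]} (hN : N ≠ 0) : (cp N).leadingCoeff = C (N.leadingCoeff) := by
  rw [leadingCoeff, cp_natDegree hN, (cp_natDegree_le N).2]

lemma cp_monic {N : F[X]} (hN : N.Monic) : (cp N).Monic := by
  rw [Monic, cp_leadingCoeff hN.ne_zero, hN.leadingCoeff, C_1]

lemma cp_coeff_zero (N : F[X]) : (cp N).coeff 0 = 0 := by
  have := aeval_cp N (0 : F[X])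
  rw [map_zero, coe_aeval_eq_eval] at this
  rw [coeff_zero_eq_eval_zero, this]

/-- If `x` is `N`-torsion then `x` divides `N` or is zero. -/
lemma carl_eq (N : F[X]) : ∃ g : F[X][X], cp N = X * (C N + X * g) := by
  obtain ⟨h, hh⟩ := X_dvd_iff.2 (cp_coeff_zero N)
  have h0 : h.coeff 0 = N := by
    have := congrArg (fun p => coeff p 0) (derivative_cp N)
    simp [coeff_derivative] at this
    rw [hh] at this
    simpa using this
  refine ⟨h.divX, ?_⟩
  rw [hh]
  congr 1
  conv_lhs => rw [← h.divX_mul_X_add, h0]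
  ring

lemma coprime_torsion {M N : F[X]} (h : IsCoprime M N) {x : R} (h1 : carl R M x = 0)
    (h2 : carl R N x = 0) : x = 0 := by
  obtain ⟨a, b, hab⟩ := h
  rw [← carl_one (F := F) x, ← hab, carl_add, carl_mul, carl_mul, h1, h2]; simp

lemma torsion_of_dvd {M N : F[X]} (h : M ∣ N) {x : R} (h1 : carl R M x = 0) : carl R N x = 0 := by
  obtain ⟨d, rfl⟩ := h
  rw [mul_comm, carl_mul, h1, map_zero]

end basics

end CarlitzAux

set_option linter.unusedSectionVars false

namespace CarlitzAux

section fields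

variable {F : Type} [Field F] [Fintype F]
variable {L : Type} [Field L] [Algebra F L] [Algebra F[X] L] [IsScalarTower F F[X] L]

lemma algebraMap_C (c : F) : algebraMap F[X] L (C c) = algebraMap F L c := by
  rw [IsScalarTower.algebraMap_apply F F[X] L]; rfl

/-- The Carlitz polynomial over the field `L`. -/
noncomputable def cpL (L : Type) [Field L] [Algebra F[X] L] (N : F[X]) : L[X] :=
  (cp N).map (algebraMap F[X] L)

lemma eval_cpL (N : F[X]) (x : L) : (cpL L N).eval x = carl L N x := by
  rw [cpL, eval_map_algebraMap, aeval_cp]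

lemma cpL_natDegree {N : F[X]} (hN : N ≠ 0) :
    (cpL L N).natDegree = Fintype.card F ^ N.natDegree := by
  rw [cpL, natDegree_map_of_leadingCoeff_ne_zero, cp_natDegree hN]
  rw [cp_leadingCoeff hN, algebraMap_C]
  simpa using hN

lemma cpL_ne_zero {N : F[X]} (hN : N ≠ 0) : cpL L N ≠ 0 := by
  intro h
  have := cpL_natDegree (L := L) hN
  rw [h, natDegree_zero] at this
  have : 0 < Fintype.card F ^ N.natDegree := by positivity
  omega

lemma cpL_derivative (N : F[X]) : derivative (cpL L N) = C (algebraMap F[X] L N) := by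
  rw [cpL, derivative_map, derivative_cp, map_C]

lemma torsion_finite {N : F[X]} (hN : N ≠ 0) : {x : L | carl L N x = 0}.Finite := by
  refine (rootSet_finite (cpL L N) L).subset ?_
  intro x hx
  rw [mem_rootSet]
  exact ⟨cpL_ne_zero hN, by rw [coe_aeval_eq_eval, eval_cpL]; exact hx⟩

lemma torsion_ncard [IsAlgClosed L] {N : F[X]} (hN : algebraMap F[X] L N ≠ 0) :
    {x : L | carl L N x = 0}.ncard = Fintype.card F ^ N.natDegree := by
  have hN0 : N ≠ 0 := by rintro rfl; simp at hN
  have hs : (cpL L N).Separable := by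
    rw [separable_def, cpL_derivative]
    refine ⟨0, C (algebraMap F[X] L N)⁻¹, ?_⟩
    rw [zero_mul, zero_add, ← C_mul, inv_mul_cancel₀ hN, C_1]
  have h1 : {x : L | carl L N x = 0} = (cpL L N).rootSet L := by
    ext x
    rw [mem_rootSet, coe_aeval_eq_eval, eval_cpL]
    simp [cpL_ne_zero hN0]
  rw [h1, ← cpL_natDegree (L := L) hN0, ← card_rootSet_eq_natDegree (K := L) hs
    (IsAlgClosed.splits _), Set.ncard_eq_toFinset_card', Set.toFinset_card]

/-- Small polynomials. -/
lemma inj_count {N : F[X]} (x : L) (hx : ∀ f : F[X], carl L f x = 0 → N ∣ f)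
    (S : Set L) (hS : S.Finite) (hSx : ∀ f : F[X], carl L f x ∈ S) :
    Fintype.card F ^ N.natDegree ≤ (S ∩ Set.range (fun f : F[X] => carl L f x)).ncard := by
  classical
  let e := (degreeLTEquiv F N.natDegree).symm
  have h := Set.ncard_le_ncard_of_injOn (s := (Set.univ : Set (Fin N.natDegree → F)))
    (t := S ∩ Set.range (fun f : F[X] => carl L f x)) (fun v => carl L (e v : F[X]) x)
    (fun v _ => ⟨hSx _, ⟨_, rfl⟩⟩) ?_ (hS.inter_of_left _)
  · simpa [Set.ncard_univ] using h
  · intro v _ w _ hvw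
    have h1 : carl L ((e v : F[X]) - (e w : F[X])) x = 0 := by
      rw [carl_sub]; exact sub_eq_zero.2 hvw
    have h2 := hx _ h1
    have h3 : ((e v : F[X]) - (e w : F[X])).degree < (N.natDegree : ℕ) :=
      mem_degreeLT.1 (Submodule.sub_mem _ (e v).2 (e w).2)
    have h4 : (e v : F[X]) - (e w : F[X]) = 0 := by
      by_contra hne
      have h5 := natDegree_le_of_dvd h2 hne
      have h6 := (natDegree_lt_iff_degree_lt hne).2 h3
      omega
    exact e.injective (Subtype.ext (sub_eq_zero.1 h4))

lemma reduction_algClosed [IsAlgClosed L] {P : F[X]} (hP : P.Monic) (hPi : Irreducible P)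
    (h0 : algebraMap F[X] L P = 0) (x : L) :
    carl L P x = x ^ (Fintype.card F ^ P.natDegree) := by
  classical
  have hd : derivative (cpL L P) = 0 := by rw [cpL_derivative, h0, C_0]
  have hm : (cpL L P).Monic := (cp_monic hP).map _
  have hroot : ∀ w ∈ (cpL L P).roots, w = 0 := by
    intro w hw
    by_contra hw0
    have hwr : (cpL L P).IsRoot w := isRoot_of_mem_roots hw
    have hwt : carl L P w = 0 := by rw [← eval_cpL]; exact hwr
    have hx : ∀ f : F[X], carl L f w = 0 → P ∣ f := by
      intro f hf
      by_contra hnd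
      exact hw0 (coprime_torsion ((hPi.coprime_iff_not_dvd).2 hnd) hwt hf)
    have h1 := inj_count (N := P) w hx ((cpL L P).roots.toFinset : Set L)
      (Finset.finite_toSet _) (fun f => by
        simp only [Finset.mem_coe, Multiset.mem_toFinset]
        rw [mem_roots hm.ne_zero, IsRoot, eval_cpL, carl_comm, hwt, map_zero])
    have h2 := h1.trans (Set.ncard_le_ncard Set.inter_subset_left (Finset.finite_toSet _))
    rw [Set.ncard_coe_finset] at h2
    have h3 : 1 < (cpL L P).roots.count w := by
      rw [count_roots]
      exact (one_lt_rootMultiplicity_iff_isRoot hm.ne_zero).2 ⟨hwr, by rw [hd]; simp⟩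
    have h4 : (cpL L P).roots.toFinset.card < (cpL L P).roots.card := by
      refine lt_of_le_of_ne (Multiset.toFinset_card_le _) ?_
      intro h
      have := Multiset.toFinset_card_eq_card_iff_nodup.1 h
      have := Multiset.nodup_iff_count_le_one.1 this w
      omega
    have h5 := (cpL L P).card_roots'
    rw [cpL_natDegree hP.ne_zero] at h5
    omega
  have hr : (cpL L P).roots = Multiset.replicate (Fintype.card F ^ P.natDegree) 0 := by
    rw [Multiset.eq_replicate]
    refine ⟨?_, hroot⟩
    rw [← cpL_natDegree (L := L) hP.ne_zero]
    exact ((IsAlgClosed.splits (cpL L P)).natDegree_eq_card_roots).symm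
  have h := (IsAlgClosed.splits (cpL L P)).eq_prod_roots_of_monic hm
  rw [← eval_cpL, h, hr]
  simp

lemma reduction {P : F[X]} (hP : P.Monic) (hPi : Irreducible P)
    (h0 : algebraMap F[X] L P = 0) (x : L) :
    carl L P x = x ^ (Fintype.card F ^ P.natDegree) := by
  apply (algebraMap L (AlgebraicClosure L)).injective
  have he : ∀ a : F[X], algebraMap L (AlgebraicClosure L) (algebraMap F[X] L a) =
      algebraMap F[X] (AlgebraicClosure L) a := fun a =>
    (IsScalarTower.algebraMap_apply F[X] L (AlgebraicClosure L) a).symm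
  rw [carl_map _ he, reduction_algClosed hP hPi, map_pow]
  rw [← he, h0, map_zero]

lemma exists_order [IsAlgClosed L] (hinj : ∀ N : F[X], N ≠ 0 → algebraMap F[X] L N ≠ 0)
    (N : F[X]) (hN : N ≠ 0) : ∃ x : L, ∀ f : F[X], carl L f x = 0 ↔ N ∣ f := by
  classical
  induction N using UniqueFactorizationMonoid.induction_on_coprime with
  | h0 => exact absurd rfl hN
  | h1 hu => exact ⟨0, fun f => by simp [hu.dvd]⟩
  | hpr k hp =>
    rename_i p
    have hp0 := hp.ne_zero
    cases k with
    | zero => exact ⟨0, fun f => by simp⟩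
    | succ k =>
      have hex : ∃ x : L, carl L (p ^ (k+1)) x = 0 ∧ carl L (p ^ k) x ≠ 0 := by
        by_contra hcon
        push Not at hcon
        have h1 := Set.ncard_le_ncard (s := {x : L | carl L (p ^ (k+1)) x = 0})
          (t := {x : L | carl L (p ^ k) x = 0}) hcon (torsion_finite (pow_ne_zero _ hp0))
        rw [torsion_ncard (hinj _ (pow_ne_zero _ hp0)), torsion_ncard (hinj _ (pow_ne_zero _ hp0)),
          natDegree_pow, natDegree_pow] at h1
        have h2 : k * p.natDegree < (k+1) * p.natDegree := by
          have := hp.irreducible.natDegree_pos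
          nlinarith
        have := Nat.pow_lt_pow_right (Fintype.one_lt_card (α := F)) h2
        omega
      obtain ⟨x, hx1, hx2⟩ := hex
      refine ⟨x, fun f => ⟨fun hf => ?_, fun hf => torsion_of_dvd hf hx1⟩⟩
      have hg : carl L (EuclideanDomain.gcd f (p ^ (k+1))) x = 0 := by
        rw [EuclideanDomain.gcd_eq_gcd_ab, carl_add, mul_comm, carl_mul, hf, mul_comm, carl_mul, hx1]
        simp
      obtain ⟨i, hi, hass⟩ := (dvd_prime_pow hp _).1 (EuclideanDomain.gcd_dvd_right f (p ^ (k+1)))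
      rcases Nat.lt_or_ge i (k+1) with h | h
      · exact absurd (torsion_of_dvd (hass.dvd.trans (pow_dvd_pow p (Nat.lt_succ_iff.1 h))) hg) hx2
      · have : i = k + 1 := le_antisymm hi h
        subst this
        exact hass.symm.dvd.trans (EuclideanDomain.gcd_dvd_left _ _)
  | hcp hxy ihx ihy =>
    rename_i a b
    obtain ⟨x, hx⟩ := ihx (left_ne_zero_of_mul hN)
    obtain ⟨y, hy⟩ := ihy (right_ne_zero_of_mul hN)
    have hab : IsCoprime a b := hxy.isCoprime
    have hax := (hx a).2 dvd_rfl
    have hby := (hy b).2 dvd_rfl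
    refine ⟨x + y, fun f => ⟨fun hf => ?_, fun hf => ?_⟩⟩
    · rw [map_add] at hf
      refine hab.mul_dvd ?_ ?_
      · refine hab.dvd_of_dvd_mul_left (y := b) ((hx _).1 ?_)
        have := congrArg (carl L b) hf
        rw [map_add, carl_comm b f y, hby, map_zero, add_zero, map_zero] at this
        rw [carl_mul, this]
      · refine hab.symm.dvd_of_dvd_mul_left (y := a) ((hy _).1 ?_)
        have := congrArg (carl L a) hf
        rw [map_add, carl_comm a f x, hax, map_zero, zero_add, map_zero] at this
        rw [carl_mul, this]
    · rw [map_add, (hx f).2 ((Dvd.intro _ rfl).trans hf),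
        (hy f).2 ((Dvd.intro_left _ rfl).trans hf), add_zero]

lemma exists_gen [IsAlgClosed L] (hinj : ∀ N : F[X], N ≠ 0 → algebraMap F[X] L N ≠ 0)
    (N : F[X]) (hN : N ≠ 0) : ∃ x : L, (∀ f : F[X], carl L f x = 0 ↔ N ∣ f) ∧
      ∀ y, carl L N y = 0 → ∃ f : F[X], y = carl L f x := by
  obtain ⟨x, hx⟩ := exists_order hinj N hN
  refine ⟨x, hx, ?_⟩
  have hx0 := (hx N).2 dvd_rfl
  have h1 := inj_count (N := N) x (fun f => (hx f).1) {y : L | carl L N y = 0}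
    (torsion_finite hN) (fun f => by
      simp only [Set.mem_ofPred_eq]; rw [carl_comm, hx0, map_zero])
  rw [← torsion_ncard (L := L) (hinj N hN)] at h1
  have h2 := Set.eq_of_subset_of_ncard_le Set.inter_subset_left h1 (torsion_finite hN)
  intro y hy
  have hy' : y ∈ {y : L | carl L N y = 0} := hy
  rw [← h2] at hy'
  obtain ⟨f, hf⟩ := hy'.2
  exact ⟨f, hf.symm⟩

end fields

end CarlitzAux

namespace CarlitzAux

section frob

variable {F : Type} [Field F] [Fintype F]

lemma natCard_quot {P : F[X]} (hP : P ≠ 0) :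
    Nat.card (F[X] ⧸ Ideal.span {P}) = Fintype.card F ^ P.natDegree := by
  have : Module.Finite F (F[X] ⧸ Ideal.span {P}) :=
    Module.Finite.of_basis (AdjoinRoot.powerBasis hP).basis
  rw [Module.natCard_eq_pow_finrank (K := F), finrank_quotient_span_eq_natDegree,
    Nat.card_eq_fintype_card]

lemma finite_quot {P : F[X]} (hP : P ≠ 0) : Finite (F[X] ⧸ Ideal.span {P}) := by
  apply Nat.finite_of_card_ne_zero
  rw [natCard_quot hP]
  have : 0 < Fintype.card F ^ P.natDegree := by positivity
  omega

lemma frob_aux {K L S : Type} [Field K] [Field L] [CommRing S] [IsDomain S] [Algebra F[X] K]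
    [IsFractionRing F[X] K]
    [Algebra K L] [Algebra F L] [Algebra F[X] L] [IsScalarTower F F[X] L] [IsScalarTower F[X] K L]
    [FiniteDimensional K L] [IsGalois K L]
    [Algebra F S] [Algebra F[X] S] [IsScalarTower F F[X] S] [Algebra S L] [IsScalarTower F[X] S L]
    [IsIntegralClosure S F[X] L]
    {P M : F[X]} (hP : P.Monic) (hPi : Irreducible P) (hM : M ≠ 0) (hPM : ¬ P ∣ M) :
    ∃ s : L ≃ₐ[K] L, ∀ x : L, carl L M x = 0 → s x = carl L P x := by
  have hfr : IsFractionRing S L := IsIntegralClosure.isFractionRing_of_finite_extension F[X] K L S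
  have hinvt : Algebra.IsInvariant F[X] S (S ≃ₐ[F[X]] S) :=
    Algebra.isInvariant_of_isGalois' F[X] K L S
  have hIntg : Algebra.IsIntegral F[X] S := IsIntegralClosure.isIntegral_algebra F[X] L
  have hfin : Module.Finite F[X] S := IsIntegralClosure.finite F[X] K L S
  have hinjS : Function.Injective (algebraMap S L) := IsIntegralClosure.algebraMap_injective S F[X] L
  have hinjA : Function.Injective (algebraMap F[X] S) := by
    have h : Function.Injective (algebraMap F[X] L) := by
      rw [IsScalarTower.algebraMap_eq F[X] K L]
      exact (algebraMap K L).injective.comp (IsFractionRing.injective F[X] K)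
    rw [IsScalarTower.algebraMap_eq F[X] S L] at h
    exact Function.Injective.of_comp h
  have hprime : (Ideal.span {P}).IsPrime :=
    (Ideal.span_singleton_prime hPi.ne_zero).2 hPi.prime
  obtain ⟨Q, hQ, hQP⟩ := Ideal.exists_ideal_over_prime_of_isIntegral_of_isDomain (S := S)
    (Ideal.span {P}) (by rw [(RingHom.injective_iff_ker_eq_bot _).1 hinjA]; exact bot_le)
  have hQu : Q.under F[X] = Ideal.span {P} := hQP
  have hfq : Finite (F[X] ⧸ Q.under F[X]) := by rw [hQu]; exact finite_quot hPi.ne_zero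
  have hfS : Finite (S ⧸ Q) := by
    have : Module.Finite (F[X] ⧸ Q.under F[X]) (S ⧸ Q) :=
      Module.Finite.of_restrictScalars_finite F[X] _ _
    exact Module.finite_of_finite (F[X] ⧸ Q.under F[X])
  have hfG : Finite (S ≃ₐ[F[X]] S) := Finite.of_equiv _ (galRestrict F[X] K L S).toEquiv
  obtain ⟨g, hg⟩ := IsArithFrobAt.exists_of_isInvariant F[X] (S ≃ₐ[F[X]] S) Q
  have hmax : Q.IsMaximal := Ideal.Quotient.maximal_of_isField _ (Finite.isField_of_domain (S ⧸ Q))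
  let : Field (S ⧸ Q) := Ideal.Quotient.field Q
  have hred : ∀ x : S, g x - carl S P x ∈ Q := by
    intro x
    have h1 : g x - x ^ Nat.card (F[X] ⧸ Q.under F[X]) ∈ Q := hg x
    have h2 : x ^ Nat.card (F[X] ⧸ Q.under F[X]) - carl S P x ∈ Q := by
      rw [← Ideal.Quotient.eq, map_pow,
        carl_map (R' := S ⧸ Q) (Ideal.Quotient.mk Q) (fun a => rfl), reduction hP hPi, hQu,
        natCard_quot hPi.ne_zero]
      rw [IsScalarTower.algebraMap_apply F[X] S (S ⧸ Q)]
      refine Ideal.Quotient.eq_zero_iff_mem.2 ?_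
      have : P ∈ Q.comap (algebraMap F[X] S) := by rw [hQP]; exact Ideal.mem_span_singleton_self P
      exact this
    have := Q.add_mem h1 h2
    simpa using this
  have htor : ∀ x : S, carl S M x = 0 → x ∈ Q → x = 0 := by
    intro x hx hxQ
    by_contra hx0
    obtain ⟨w, hw⟩ := carl_eq M
    have h1 := aeval_cp M x
    rw [hx, hw] at h1
    simp only [map_mul, map_add, aeval_X, aeval_C] at h1
    have h2 := (mul_eq_zero.1 h1).resolve_left hx0
    have h3 : algebraMap F[X] S M ∈ Q := by
      rw [eq_neg_of_add_eq_zero_left h2]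
      exact Q.neg_mem (Q.mul_mem_right _ hxQ)
    have h4 : M ∈ Q.comap (algebraMap F[X] S) := h3
    rw [hQP] at h4
    exact hPM (Ideal.mem_span_singleton.1 h4)
  refine ⟨(galRestrict F[X] K L S).symm g, fun x hx => ?_⟩
  have hxi : IsIntegral F[X] x := by
    have hl : M.leadingCoeff ≠ 0 := leadingCoeff_ne_zero.2 hM
    refine ⟨cp (C (M.leadingCoeff⁻¹) * M), cp_monic ?_, ?_⟩
    · rw [Monic, leadingCoeff_mul, leadingCoeff_C, inv_mul_cancel₀ hl]
    · rw [← aeval_def, aeval_cp, carl_mul, hx, map_zero]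
  have hc : ∀ (N : F[X]) (z : S), algebraMap S L (carl S N z) = carl L N (algebraMap S L z) :=
    carl_map (algebraMap S L) (fun a => (IsScalarTower.algebraMap_apply F[X] S L a).symm)
  obtain ⟨y, rfl⟩ := (IsIntegralClosure.isIntegral_iff (A := S)).1 hxi
  have hy : carl S M y = 0 := hinjS (by rw [hc, hx, map_zero])
  rw [← algebraMap_galRestrict_apply F[X], MulEquiv.apply_symm_apply, ← hc]
  congr 1
  apply sub_eq_zero.1
  refine htor _ ?_ (hred y)
  have hgy : carl S M (g y) = 0 := by
    have := carl_map (R := S) (R' := S) (g : S ≃+* S).toRingHom (fun a => g.commutes a) M y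
    rw [hy, map_zero] at this
    exact this.symm
  rw [map_sub, hgy, carl_comm, hy, map_zero, sub_zero]

variable {K L : Type} [Field K] [Field L] [Algebra F[X] K] [IsFractionRing F[X] K]
    [Algebra K L] [Algebra F L] [Algebra F[X] L] [IsScalarTower F F[X] L] [IsScalarTower F[X] K L]

lemma alg_carl (s : L ≃ₐ[K] L) (N : F[X]) (x : L) : s (carl L N x) = carl L N (s x) := by
  refine carl_map (R := L) (R' := L) (s : L ≃+* L).toRingHom (fun a => ?_) N x
  rw [IsScalarTower.algebraMap_apply F[X] K L]
  exact s.commutes _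

variable (K) in
lemma exists_sigma [FiniteDimensional K L] [IsGalois K L] {M : F[X]} (hM : M ≠ 0) (B : F[X])
    (hB : IsCoprime B M) :
    ∃ s : L ≃ₐ[K] L, ∀ x : L, carl L M x = 0 → s x = carl L B x := by
  -- primes
  have hpr : ∀ P : F[X], P.Monic → Irreducible P → IsCoprime P M →
      ∃ s : L ≃ₐ[K] L, ∀ x : L, carl L M x = 0 → s x = carl L P x := by
    intro P h1 h2 h3
    exact frob_aux (S := integralClosure F[X] L) h1 h2 hM
      (fun h => h2.not_isUnit (h3.isUnit_of_dvd' dvd_rfl h))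
  have hms : ∀ s : Multiset F[X], (∀ P ∈ s, P.Monic ∧ Irreducible P ∧ IsCoprime P M) →
      ∃ t : L ≃ₐ[K] L, ∀ x : L, carl L M x = 0 → t x = carl L s.prod x := by
    intro s
    induction s using Multiset.induction_on with
    | empty => intro _; exact ⟨1, fun x _ => by simp⟩
    | cons P s ih =>
      intro h
      obtain ⟨t, ht⟩ := ih (fun Q hQ => h Q (Multiset.mem_cons_of_mem hQ))
      obtain ⟨h1, h2, h3⟩ := h P (Multiset.mem_cons_self _ _)
      obtain ⟨u, hu⟩ := hpr P h1 h2 h3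
      refine ⟨u * t, fun x hx => ?_⟩
      rw [Multiset.prod_cons, carl_mul, AlgEquiv.mul_apply, ht x hx, hu]
      rw [carl_comm, hx, map_zero]
  have hmonic : ∀ B : F[X], B.Monic → IsCoprime B M →
      ∃ t : L ≃ₐ[K] L, ∀ x : L, carl L M x = 0 → t x = carl L B x := by
    classical
    intro B hB hBM
    obtain ⟨t, ht⟩ := hms (UniqueFactorizationMonoid.normalizedFactors B) (fun P hP => by
      have hi := UniqueFactorizationMonoid.irreducible_of_normalized_factor P hP
      refine ⟨?_, hi, ?_⟩
      · rw [← UniqueFactorizationMonoid.normalize_normalized_factor P hP]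
        exact monic_normalize hi.ne_zero
      · exact hBM.of_isCoprime_of_dvd_left
          (UniqueFactorizationMonoid.dvd_of_mem_normalizedFactors hP))
    refine ⟨t, fun x hx => ?_⟩
    rw [ht x hx, UniqueFactorizationMonoid.prod_normalizedFactors_eq hB.ne_zero,
      hB.normalize_eq_self]
  -- general: replace B by a monic representative
  have hl : M.leadingCoeff ≠ 0 := leadingCoeff_ne_zero.2 hM
  set D : F[X] := C (M.leadingCoeff⁻¹) * X ^ (B.natDegree + 1) with hD
  have hMD : (M * D).Monic := by
    rw [Monic, leadingCoeff_mul, hD, leadingCoeff_mul, leadingCoeff_C, leadingCoeff_X_pow,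
      mul_one, mul_inv_cancel₀ hl]
  have hdeg : B.natDegree < (M * D).natDegree := by
    have hD0 : D ≠ 0 := right_ne_zero_of_mul hMD.ne_zero
    rw [natDegree_mul hM hD0, hD, natDegree_C_mul_X_pow _ _ (inv_ne_zero hl)]
    omega
  obtain ⟨t, ht⟩ := hmonic (B + M * D) (hMD.add_of_right (degree_lt_degree hdeg))
    (IsCoprime.add_mul_left_left hB D)
  refine ⟨t, fun x hx => ?_⟩
  rw [ht x hx, carl_add, mul_comm, carl_mul, hx, map_zero, add_zero]

end frob

section algebra

variable {F : Type} [Field F] [Fintype F]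

lemma exists_v {M : F[X]} (hq : ¬ (Fintype.card F = 2 ∧ (X ∣ M ∨ X + 1 ∣ M))) :
    ∃ v : F[X], IsCoprime v M ∧ IsCoprime (v - 1) M := by
  classical
  by_cases h2 : Fintype.card F = 2
  · have hX : ¬ X ∣ M := fun h => hq ⟨h2, Or.inl h⟩
    have hX1 : ¬ (X + 1) ∣ M := fun h => hq ⟨h2, Or.inr h⟩
    have hneg : (X : F[X]) - 1 = X + 1 := by
      have h : ((Fintype.card F : ℕ) : F[X]) = 0 := card_cast _
      rw [h2] at h
      push_cast at h
      linear_combination (-1 : F[X]) * h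
    refine ⟨X, (irreducible_X.coprime_iff_not_dvd).2 hX, ?_⟩
    rw [hneg]
    refine (Irreducible.coprime_iff_not_dvd ?_).2 hX1
    have := irreducible_X_sub_C (1 : F)
    rwa [C_1, hneg] at this
  · have hlt : 2 < Fintype.card F := by
      have := Fintype.one_lt_card (α := F)
      omega
    obtain ⟨c, hc⟩ : ∃ c : F, c ∉ ({0, 1} : Finset F) := by
      by_contra hcon
      push Not at hcon
      have h1 := Finset.card_le_card (s := Finset.univ) (t := ({0, 1} : Finset F))
        (fun c _ => hcon c)
      have := Finset.card_le_two (a := (0 : F)) (b := 1)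
      rw [Finset.card_univ] at h1
      omega
    simp only [Finset.mem_insert, Finset.mem_singleton, not_or] at hc
    refine ⟨C c, ?_, ?_⟩
    · exact ⟨C c⁻¹, 0, by rw [zero_mul, add_zero, ← C_mul, inv_mul_cancel₀ hc.1, C_1]⟩
    · rw [← C_1, ← C_sub]
      exact ⟨C (c - 1)⁻¹, 0, by
        rw [zero_mul, add_zero, ← C_mul, inv_mul_cancel₀ (sub_ne_zero.2 hc.2), C_1]⟩

lemma exists_units {M : F[X]} (hM : M ≠ 0)
    (hv : ∃ v : F[X], IsCoprime v M ∧ IsCoprime (v - 1) M) (f : F[X]) :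
    ∃ g : F[X], IsCoprime g M ∧ IsCoprime (f - g) M := by
  obtain ⟨v, hv1, hv2⟩ := hv
  induction M using UniqueFactorizationMonoid.induction_on_prime with
  | h₁ => exact absurd rfl hM
  | h₂ x hx => exact ⟨0, isCoprime_zero_left.2 hx, ⟨0, _, by rw [zero_mul, zero_add]; exact hx.val_inv_mul⟩⟩
  | h₃ N P hN hP ih =>
    have hPi := hP.irreducible
    obtain ⟨g, hg1, hg2⟩ := ih hN hv1.of_mul_right_right hv2.of_mul_right_right
    have hv1P := hv1.of_mul_right_left
    have hv2P := hv2.of_mul_right_left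
    by_cases hPN : P ∣ N
    · refine ⟨g, ?_, ?_⟩
      · exact IsCoprime.mul_right (hg1.of_isCoprime_of_dvd_right hPN) hg1
      · exact IsCoprime.mul_right (hg2.of_isCoprime_of_dvd_right hPN) hg2
    · have hcop : IsCoprime P N := hPi.coprime_iff_not_dvd.2 hPN
      obtain ⟨u, hu1, hu2⟩ : ∃ u : F[X], ¬ P ∣ u ∧ ¬ P ∣ f - u := by
        by_cases h : P ∣ f - 1
        · refine ⟨v, ?_, ?_⟩
          · intro h'
            exact hPi.not_isUnit (hv1P.isUnit_of_dvd' h' dvd_rfl)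
          · intro h'
            have : P ∣ v - 1 := by
              have := dvd_sub h h'
              rwa [show f - 1 - (f - v) = v - 1 by ring] at this
            exact hPi.not_isUnit (hv2P.isUnit_of_dvd' this dvd_rfl)
        · exact ⟨1, fun h' => hPi.not_isUnit (isUnit_of_dvd_one h'), h⟩
      obtain ⟨b, a, hab⟩ := hcop
      have hk : g + N * (a * (u - g)) = u + P * (- b * (u - g)) := by
        linear_combination (u - g) * hab
      refine ⟨g + N * (a * (u - g)), IsCoprime.mul_right ?_ ?_, IsCoprime.mul_right ?_ ?_⟩
      · rw [hk]
        refine IsCoprime.symm (hPi.coprime_iff_not_dvd.2 (fun h => hu1 ?_))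
        exact (dvd_add_left (dvd_mul_right _ _)).1 h
      · exact IsCoprime.add_mul_left_left hg1 _
      · rw [hk, ← sub_sub]
        refine IsCoprime.symm (hPi.coprime_iff_not_dvd.2 (fun h => hu2 ?_))
        exact (dvd_sub_left (dvd_mul_right _ _)).1 h
      · rw [← sub_sub, sub_eq_add_neg, ← mul_neg]
        exact IsCoprime.add_mul_left_left hg2 _

lemma dual {M : F[X]} (hM : M ≠ 0) {r : ℕ} (W : Submodule F[X] (Fin r → F[X]))
    (hMW : ∀ f : Fin r → F[X], M • f ∈ W)
    (hW : ∀ g : Fin r → F[X], (∀ f ∈ W, M ∣ ∑ i, g i * f i) → ∀ i, M ∣ g i) : W = ⊤ := by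
  classical
  by_contra hne
  obtain ⟨N, hN, hWN⟩ := (eq_top_or_exists_le_coatom W).resolve_left hne
  have hs : IsSimpleModule F[X] ((Fin r → F[X]) ⧸ N) := isSimpleModule_iff_isCoatom.2 hN
  obtain ⟨I, hI, ⟨e⟩⟩ := isSimpleModule_iff_quot_maximal.1 hs
  obtain ⟨P, hP⟩ := (IsPrincipalIdealRing.principal I).principal
  have hmem : ∀ z, z ∈ I ↔ P ∣ z := fun z => by rw [hP]; exact Ideal.mem_span_singleton
  let l : (Fin r → F[X]) →ₗ[F[X]] (F[X] ⧸ I) := e.toLinearMap ∘ₗ N.mkQ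
  have hlN : ∀ f, l f = 0 ↔ f ∈ N := by
    intro f
    simp [l]
  choose t ht using fun i => Ideal.Quotient.mk_surjective (l (Pi.single i 1))
  have hlf : ∀ f, l f = Ideal.Quotient.mk I (∑ i, t i * f i) := by
    intro f
    conv_lhs => rw [pi_eq_sum_univ' f]
    rw [map_sum, map_sum]
    refine Finset.sum_congr rfl (fun i _ => ?_)
    rw [map_smul, map_mul, ht i, mul_comm]
    rfl
  have hPM : P ∣ M := by
    rw [← hmem, ← Ideal.Quotient.eq_zero_iff_mem]
    obtain ⟨f, hf⟩ : ∃ f, l f = 1 := by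
      obtain ⟨f, hf⟩ := N.mkQ_surjective (e.symm 1)
      exact ⟨f, by simp only [l, LinearMap.comp_apply, hf]; simp⟩
    have h1 := (hlN _).2 (hWN (hMW f))
    have h3 : Ideal.Quotient.mk I (M * 1) = M • (1 : F[X] ⧸ I) := rfl
    rw [map_smul, hf, ← h3, mul_one] at h1
    exact h1
  obtain ⟨D, hD⟩ := hPM
  have hD0 : D ≠ 0 := by rintro rfl; simp at hD; exact hM hD
  have h1 := hW (fun i => D * t i) (fun f hf => by
    have h2 := (hlN f).2 (hWN hf)
    rw [hlf, Ideal.Quotient.eq_zero_iff_mem, hmem] at h2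
    have h3 : ∑ i, D * t i * f i = D * ∑ i, t i * f i := by
      rw [Finset.mul_sum]; exact Finset.sum_congr rfl (fun i _ => by ring)
    rw [h3, hD, mul_comm P]
    exact mul_dvd_mul_left D h2)
  have h2 : ∀ i, P ∣ t i := by
    intro i
    have := h1 i
    rw [hD, mul_comm P] at this
    exact (mul_dvd_mul_iff_left hD0).1 this
  apply hN.1
  rw [eq_top_iff]
  intro f _
  rw [← hlN, hlf, Ideal.Quotient.eq_zero_iff_mem, hmem]
  exact Finset.dvd_sum (fun i _ => Dvd.dvd.mul_right (h2 i) _)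

end algebra

end CarlitzAux

namespace CarlitzAux

section core

variable {F : Type} [Field F] [Fintype F]
variable {K L : Type} [Field K] [Field L] [Algebra F[X] K] [IsFractionRing F[X] K]
    [Algebra K L] [Algebra F L] [Algebra F[X] L] [IsScalarTower F F[X] L] [IsScalarTower F[X] K L]

/-- `σ` fixes the `M`-torsion of `L` pointwise. -/
def Fix (M : F[X]) (σ : L ≃ₐ[K] L) : Prop := ∀ x : L, carl L M x = 0 → σ x = x

lemma phi_torsion {M : F[X]} {a : K} {α : L} (hα : carl L M α = algebraMap K L a)
    (σ : L ≃ₐ[K] L) : carl L M (σ α - α) = 0 := by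
  rw [map_sub, ← alg_carl, hα, AlgEquiv.commutes, sub_self]

lemma phi_mul {M : F[X]} {a : K} {α : L} (hα : carl L M α = algebraMap K L a)
    {σ : L ≃ₐ[K] L} (hσ : Fix M σ) (τ : L ≃ₐ[K] L) :
    (σ * τ) α - α = (σ α - α) + (τ α - α) := by
  have h := hσ _ (phi_torsion hα τ)
  rw [map_sub] at h
  rw [AlgEquiv.mul_apply]
  linear_combination h

lemma sigma_inv {M B : F[X]} {s : L ≃ₐ[K] L}
    (hs : ∀ x : L, carl L M x = 0 → s x = carl L B x) {x : L} (hx : carl L M x = 0) :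
    carl L B (s⁻¹ x) = x := by
  have h1 : carl L M (s⁻¹ x) = 0 := by rw [← alg_carl, hx, map_zero]
  rw [← hs _ h1, ← AlgEquiv.mul_apply, mul_inv_cancel, AlgEquiv.one_apply]

lemma fix_conj {M : F[X]} {σ s : L ≃ₐ[K] L} (hσ : Fix M σ) : Fix M (s * σ * s⁻¹) := by
  intro x hx
  have h1 : carl L M (s⁻¹ x) = 0 := by rw [← alg_carl, hx, map_zero]
  rw [AlgEquiv.mul_apply, AlgEquiv.mul_apply, hσ _ h1, ← AlgEquiv.mul_apply, mul_inv_cancel,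
    AlgEquiv.one_apply]

lemma phi_conj {M B : F[X]} {a : K} {α : L} (hα : carl L M α = algebraMap K L a)
    {σ : L ≃ₐ[K] L} (hσ : Fix M σ) {s : L ≃ₐ[K] L}
    (hs : ∀ x : L, carl L M x = 0 → s x = carl L B x) :
    (s * σ * s⁻¹) α - α = carl L B (σ α - α) := by
  have h1 := hσ _ (phi_torsion hα s⁻¹)
  have h2 := hs _ (phi_torsion hα σ)
  have h3 : s (s⁻¹ α) = α := by
    rw [← AlgEquiv.mul_apply, mul_inv_cancel, AlgEquiv.one_apply]
  rw [AlgEquiv.mul_apply, AlgEquiv.mul_apply, ← h2]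
  have h4 : σ (s⁻¹ α) = s⁻¹ α + (σ α - α) := by
    rw [map_sub] at h1
    linear_combination h1
  rw [h4, map_add, h3]; ring

lemma fix_mul {M : F[X]} {σ τ : L ≃ₐ[K] L} (hσ : Fix M σ) (hτ : Fix M τ) : Fix M (σ * τ) := by
  intro x hx
  rw [AlgEquiv.mul_apply, hτ x hx, hσ x hx]

/-- An element fixed by `Gal(L/k(Λ_M))` with `M`-multiple in `k` is in `k` up to torsion. -/
lemma descent [FiniteDimensional K L] [IsGalois K L] {M : F[X]} (hM : M ≠ 0)
    (hv : ∃ v : F[X], IsCoprime v M ∧ IsCoprime (v - 1) M) {b : K} {β : L}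
    (hβ : carl L M β = algebraMap K L b) (hfix : ∀ σ : L ≃ₐ[K] L, Fix M σ → σ β = β) :
    ∃ y : K, carl L M (algebraMap K L y) = algebraMap K L b := by
  obtain ⟨B, hB, hB1⟩ := hv
  obtain ⟨s, hs⟩ := exists_sigma (L := L) K hM B hB
  have hμ := phi_torsion hβ s
  set μ := s β - β with hμd
  obtain ⟨D, D', hD⟩ := id hB1
  have hDμ : carl L ((B - 1) * D) μ = μ := by
    have : (B - 1) * D = 1 - D' * M := by linear_combination hD
    rw [this, carl_sub, carl_one, carl_mul, hμ, map_zero, sub_zero]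
  set l := carl L D μ with hl
  have hlt : carl L M l = 0 := by rw [hl, carl_comm, hμ, map_zero]
  have hsl : s l = μ + l := by
    rw [hs _ hlt, ← hDμ, carl_mul, carl_sub, carl_one, ← hl]
    ring
  set γ := β - l with hγ
  have hsγ : s γ = γ := by
    rw [hγ, map_sub, hsl]
    linear_combination -hμd
  have hγM : carl L M γ = algebraMap K L b := by rw [hγ, map_sub, hlt, hβ, sub_zero]
  have hfγ : ∀ σ : L ≃ₐ[K] L, Fix M σ → σ γ = γ := by
    intro σ hσ
    rw [hγ, map_sub, hfix σ hσ, hσ l hlt]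
  have hall : ∀ τ : L ≃ₐ[K] L, τ γ = γ := by
    intro τ
    have hcomm : Fix M (τ⁻¹ * s⁻¹ * τ * s) := by
      intro x hx
      have h1 : carl L M (τ x) = 0 := by rw [← alg_carl, hx, map_zero]
      rw [AlgEquiv.mul_apply, AlgEquiv.mul_apply, AlgEquiv.mul_apply, hs x hx, alg_carl τ,
        ← hs _ h1, ← AlgEquiv.mul_apply s⁻¹, inv_mul_cancel, AlgEquiv.one_apply,
        ← AlgEquiv.mul_apply, inv_mul_cancel, AlgEquiv.one_apply]
    have h2 := hfγ _ hcomm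
    have h3 : s (τ γ) = τ γ := by
      have h4 : (s * τ) ((τ⁻¹ * s⁻¹ * τ * s) γ) = (s * τ) γ := by rw [h2]
      rw [← AlgEquiv.mul_apply, show s * τ * (τ⁻¹ * s⁻¹ * τ * s) = τ * s by group,
        AlgEquiv.mul_apply, hsγ, AlgEquiv.mul_apply] at h4
      exact h4.symm
    have hν := phi_torsion hγM τ
    have h5 := hs _ hν
    rw [map_sub, h3, hsγ] at h5
    have h6 : carl L (B - 1) (τ γ - γ) = 0 := by
      rw [carl_sub, carl_one, ← h5, sub_self]
    exact sub_eq_zero.1 (coprime_torsion hB1 h6 hν)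
  obtain ⟨y, hy⟩ := (InfiniteGalois.mem_range_algebraMap_iff_fixed (k := K) γ).2 hall
  exact ⟨y, by rw [hy, hγM]⟩

lemma core_surj [FiniteDimensional K L] [IsGalois K L] {M : F[X]} (hM : M ≠ 0)
    (hv : ∃ v : F[X], IsCoprime v M ∧ IsCoprime (v - 1) M) {r : ℕ} {a : Fin r → K}
    {α : Fin r → L} (hα : ∀ i, carl L M (α i) = algebraMap K L (a i))
    (hdiv : ∀ (g : Fin r → F[X]) (y : K), carl L M (algebraMap K L y) =
      ∑ i, carl L (g i) (algebraMap K L (a i)) → ∀ i, M ∣ g i)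
    {l : L} (hl : ∀ f : F[X], carl L f l = 0 ↔ M ∣ f)
    (hgen : ∀ y : L, carl L M y = 0 → ∃ f : F[X], y = carl L f l)
    (v : Fin r → L) (hvM : ∀ i, carl L M (v i) = 0) :
    ∃ σ : L ≃ₐ[K] L, Fix M σ ∧ ∀ i, σ (α i) - α i = v i := by
  let W : Submodule F[X] (Fin r → F[X]) :=
    { carrier := {f | ∃ σ : L ≃ₐ[K] L, Fix M σ ∧ ∀ i, σ (α i) - α i = carl L (f i) l}
      zero_mem' := ⟨1, fun x _ => rfl, fun i => by simp⟩
      add_mem' := by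
        rintro f g ⟨σ, hσ, h1⟩ ⟨τ, hτ, h2⟩
        refine ⟨σ * τ, fix_mul hσ hτ, fun i => ?_⟩
        rw [phi_mul (hα i) hσ, h1, h2, Pi.add_apply, carl_add]
      smul_mem' := by
        rintro c f ⟨σ, hσ, h1⟩
        obtain ⟨g, hg1, hg2⟩ := exists_units hM hv c
        obtain ⟨s, hs⟩ := exists_sigma (L := L) K hM g hg1
        obtain ⟨t, ht⟩ := exists_sigma (L := L) K hM _ hg2
        refine ⟨(s * σ * s⁻¹) * (t * σ * t⁻¹), fix_mul (fix_conj hσ)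
          (fix_conj hσ), fun i => ?_⟩
        rw [phi_mul (hα i) (fix_conj hσ), phi_conj (hα i) hσ hs, phi_conj (hα i) hσ ht,
          ← carl_add, h1, Pi.smul_apply, smul_eq_mul, carl_mul]
        congr 2
        ring }
  have hWtop : W = ⊤ := by
    refine dual hM W (fun f => ?_) (fun g hg => ?_)
    · refine ⟨1, fun x _ => rfl, fun i => ?_⟩
      rw [Pi.smul_apply, smul_eq_mul, (hl _).2 (dvd_mul_right _ _)]
      simp
    · set β : L := ∑ i, carl L (g i) (α i) with hβ
      have hsum : ∑ i, carl L (g i) (algebraMap K L (a i)) = carl L M β := by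
        rw [hβ, map_sum]
        exact Finset.sum_congr rfl (fun i _ => by rw [carl_comm, hα])
      have hK : ∃ b : K, carl L M β = algebraMap K L b := by
        rw [← hsum]
        refine (InfiniteGalois.mem_range_algebraMap_iff_fixed (k := K) _).2 (fun τ => ?_) |>.imp
          (fun _ h => h.symm)
        rw [map_sum]
        exact Finset.sum_congr rfl (fun i _ => by rw [alg_carl, AlgEquiv.commutes])
      obtain ⟨b, hb⟩ := hK
      obtain ⟨y, hy⟩ := descent hM hv hb (fun σ hσ => by
        have hex : ∀ i, ∃ f : F[X], σ (α i) - α i = carl L f l := fun i =>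
          hgen _ (phi_torsion (hα i) σ)
        choose f hf using hex
        have h1 : M ∣ ∑ i, g i * f i := hg f ⟨σ, hσ, hf⟩
        apply sub_eq_zero.1
        rw [← (hl _).2 h1, carl_sum, hβ, map_sum, ← Finset.sum_sub_distrib]
        refine Finset.sum_congr rfl (fun i _ => ?_)
        rw [carl_mul, ← hf, map_sub, alg_carl])
      exact hdiv g y (by rw [hy, hsum, hb])
  choose f hf using fun i => hgen (v i) (hvM i)
  have hfW : f ∈ W := by rw [hWtop]; trivial
  obtain ⟨σ, h1, h2⟩ := hfW
  exact ⟨σ, h1, fun i => by rw [h2, hf]⟩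

end core

end CarlitzAux

namespace CarlitzAux

section final

variable {F : Type} [Field F] [Fintype F]

lemma psi_eq {ψ : F[X] →+* AddMonoid.End (AlgebraicClosure (RatFunc F))} (hψ : IsCarlitz ψ)
    (f : F[X]) (x : AlgebraicClosure (RatFunc F)) :
    ψ f x = carl (AlgebraicClosure (RatFunc F)) f x := by
  refine carl_unique ψ (fun x => ?_) (fun c x => ?_) f x
  · rw [hψ.1, IsScalarTower.algebraMap_apply F[X] (RatFunc F) (AlgebraicClosure (RatFunc F)),
      RatFunc.algebraMap_X]
  · rw [hψ.2, IsScalarTower.algebraMap_apply F (RatFunc F) (AlgebraicClosure (RatFunc F)),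
      ← RatFunc.algebraMap_eq_C]

instance towerE (E : IntermediateField (RatFunc F) (AlgebraicClosure (RatFunc F))) :
    IsScalarTower F F[X] E :=
  IsScalarTower.of_algebraMap_eq (fun c => Subtype.ext
    (IsScalarTower.algebraMap_apply F F[X] (AlgebraicClosure (RatFunc F)) c))

lemma coe_carl (E : IntermediateField (RatFunc F) (AlgebraicClosure (RatFunc F)))
    (f : F[X]) (x : E) : ((carl E f x : E) : AlgebraicClosure (RatFunc F)) =
      carl (AlgebraicClosure (RatFunc F)) f (x : AlgebraicClosure (RatFunc F)) :=
  carl_map (R := E) (R' := AlgebraicClosure (RatFunc F)) (E.val : E →+* _) (fun _ => rfl) f x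

lemma carl_mem (E : IntermediateField (RatFunc F) (AlgebraicClosure (RatFunc F)))
    (f : F[X]) {x : AlgebraicClosure (RatFunc F)} (hx : x ∈ E) :
    carl (AlgebraicClosure (RatFunc F)) f x ∈ E := by
  have := coe_carl E f ⟨x, hx⟩
  rw [← this]
  exact (carl E f ⟨x, hx⟩).2

lemma algMap_ne {N : F[X]} (hN : N ≠ 0) :
    algebraMap F[X] (AlgebraicClosure (RatFunc F)) N ≠ 0 := by
  rw [IsScalarTower.algebraMap_apply F[X] (RatFunc F) (AlgebraicClosure (RatFunc F))]
  intro h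
  apply hN
  apply RatFunc.algebraMap_injective F
  apply (algebraMap (RatFunc F) (AlgebraicClosure (RatFunc F))).injective
  rw [h, map_zero, map_zero]

lemma isSep {M : F[X]} (hM : M ≠ 0) {x : AlgebraicClosure (RatFunc F)} {a : RatFunc F}
    (h : carl (AlgebraicClosure (RatFunc F)) M x = algebraMap _ _ a) :
    IsSeparable (RatFunc F) x := by
  have hM0 : algebraMap F[X] (RatFunc F) M ≠ 0 := by
    intro h
    exact hM (RatFunc.algebraMap_injective F (by rw [h, map_zero]))
  have hs : (cpL (RatFunc F) M - C a).Separable := by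
    rw [separable_def, derivative_sub, derivative_C, sub_zero, cpL_derivative]
    refine ⟨0, C (algebraMap F[X] (RatFunc F) M)⁻¹, ?_⟩
    rw [zero_mul, zero_add, ← C_mul, inv_mul_cancel₀ hM0, C_1]
  refine hs.of_dvd (minpoly.dvd _ _ ?_)
  rw [map_sub, aeval_C, cpL, aeval_map_algebraMap, aeval_cp, h, sub_self]

lemma aut_carl (σ : AlgebraicClosure (RatFunc F) →ₐ[RatFunc F] AlgebraicClosure (RatFunc F))
    (f : F[X]) (x : AlgebraicClosure (RatFunc F)) :
    σ (carl (AlgebraicClosure (RatFunc F)) f x) = carl (AlgebraicClosure (RatFunc F)) f (σ x) := by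
  refine carl_map (R := AlgebraicClosure (RatFunc F)) (R' := AlgebraicClosure (RatFunc F))
    (σ : _ →+* _) (fun a => ?_) f x
  rw [IsScalarTower.algebraMap_apply F[X] (RatFunc F) (AlgebraicClosure (RatFunc F))]
  exact σ.commutes _

lemma galois_adjoin {M : F[X]} (hM : M ≠ 0) (Γ : AddSubgroup (AlgebraicClosure (RatFunc F)))
    (hΓk : ∀ x ∈ Γ, x ∈ Set.range (algebraMap (RatFunc F) (AlgebraicClosure (RatFunc F)))) :
    IsGalois (RatFunc F)
      (adjoin (RatFunc F) {x | carl (AlgebraicClosure (RatFunc F)) M x ∈ Γ}) := by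
  have h1 : Algebra.IsSeparable (RatFunc F)
      (adjoin (RatFunc F) {x | carl (AlgebraicClosure (RatFunc F)) M x ∈ Γ}) := by
    rw [isSeparable_adjoin_iff_isSeparable]
    intro x hx
    obtain ⟨a, ha⟩ := hΓk _ hx
    exact isSep hM ha.symm
  have h2 : Normal (RatFunc F)
      (adjoin (RatFunc F) {x | carl (AlgebraicClosure (RatFunc F)) M x ∈ Γ}) := by
    rw [normal_iff_forall_map_le]
    intro σ
    rw [adjoin_map]
    apply adjoin.mono
    rintro _ ⟨x, hx, rfl⟩
    obtain ⟨a, ha⟩ := hΓk _ hx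
    have h3 : carl (AlgebraicClosure (RatFunc F)) M (σ x) =
        carl (AlgebraicClosure (RatFunc F)) M x := by
      rw [← aut_carl, ← ha, σ.commutes]
    show carl (AlgebraicClosure (RatFunc F)) M (σ x) ∈ Γ
    rw [h3]
    exact hx
  exact ⟨⟩

end final

end CarlitzAux

/-- **Corollary 2.11.**
Suppose `q ≠ 2`, or `q = 2` and `T ∤ M` and `(T+1) ∤ M`.  If `e_M(Γ) = 1` and `Γ` is a
free `A`-module of rank `r` with basis `{a_1, …, a_r}`, and `φ_i : H_Γ(M) → Λ_M` is
defined by `φ_i(σ) = σ(α_i) - α_i` where `α_i^M = a_i`, then the map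
`H_Γ(M) → Λ_M × ⋯ × Λ_M` (`r` copies), `σ ↦ (φ_1(σ), …, φ_r(σ))`, is an `A`-module
(equivalently `A/(M)`-module) isomorphism. -/
theorem carlitz_kummer_galois_group_is_full
    {Fq : Type} [Field Fq] [Fintype Fq]
    (ψ : Polynomial Fq →+* AddMonoid.End (AlgebraicClosure (RatFunc Fq)))
    (hψ : IsCarlitz ψ)
    (M : Polynomial Fq) (hM : 0 < M.natDegree)
    (hq : ¬ (Fintype.card Fq = 2 ∧ (X ∣ M ∨ X + 1 ∣ M)))
    -- Γ : a free A-submodule of (k, +) of rank r with basis a_1, …, a_r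
    (Γ : AddSubgroup (AlgebraicClosure (RatFunc Fq)))
    (hΓk : ∀ x ∈ Γ, x ∈ Set.range (algebraMap (RatFunc Fq) (AlgebraicClosure (RatFunc Fq))))
    (hΓA : ∀ (f : Polynomial Fq), ∀ x ∈ Γ, ψ f x ∈ Γ)
    (r : ℕ) (a : Fin r → AlgebraicClosure (RatFunc Fq))
    (haΓ : ∀ i, a i ∈ Γ)
    (hgen : ∀ x ∈ Γ, ∃ g : Fin r → Polynomial Fq, x = ∑ i, ψ (g i) (a i))
    (hind : ∀ g : Fin r → Polynomial Fq, ∑ i, ψ (g i) (a i) = 0 → ∀ i, g i = 0)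
    -- k_{M,Γ} = k(Λ_M, (1/M)Γ)
    (E : IntermediateField (RatFunc Fq) (AlgebraicClosure (RatFunc Fq)))
    (hE : E = adjoin (RatFunc Fq) {x | ψ M x ∈ Γ})
    -- e = e(Γ'/Γ) : the exponent of Γ' = (1/M)Γ ∩ k over Γ, with e_M(Γ) = gcd(e, M) = 1
    (e : Polynomial Fq) (he : e.Monic)
    (heΓ : ∀ x : AlgebraicClosure (RatFunc Fq),
      x ∈ Set.range (algebraMap (RatFunc Fq) (AlgebraicClosure (RatFunc Fq))) →
      ψ M x ∈ Γ → ψ e x ∈ Γ)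
    (hemin : ∀ e' : Polynomial Fq, e'.Monic →
      (∀ x : AlgebraicClosure (RatFunc Fq),
        x ∈ Set.range (algebraMap (RatFunc Fq) (AlgebraicClosure (RatFunc Fq))) →
        ψ M x ∈ Γ → ψ e' x ∈ Γ) →
      e.degree ≤ e'.degree)
    (hcop : IsCoprime e M)
    -- the natural A-module structure on H_Γ(M) = Gal(k_{M,Γ}/K)
    (c : Polynomial Fq → (↥E ≃ₐ[RatFunc Fq] ↥E) → (↥E ≃ₐ[RatFunc Fq] ↥E))
    (hc : IsDecompConjAction ψ M c)
    (hcH : ∀ f τ, FixesTorsion ψ M τ → FixesTorsion ψ M (c f τ))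
    -- the chosen roots α_i with α_i^M = a_i
    (α : Fin r → ↥E)
    (hα : ∀ i, ψ M ((α i : AlgebraicClosure (RatFunc Fq))) = a i) :
    -- σ ↦ (φ_1(σ), …, φ_r(σ)) is an A-module isomorphism H_Γ(M) ≃ Λ_M × ⋯ × Λ_M :
    -- it is additive,
    (∀ σ τ, FixesTorsion ψ M σ → FixesTorsion ψ M τ → ∀ i,
      ((σ * τ) (α i) : AlgebraicClosure (RatFunc Fq)) - (α i : AlgebraicClosure (RatFunc Fq))
        = ((σ (α i) : AlgebraicClosure (RatFunc Fq)) - (α i : AlgebraicClosure (RatFunc Fq)))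
          + ((τ (α i) : AlgebraicClosure (RatFunc Fq))
              - (α i : AlgebraicClosure (RatFunc Fq)))) ∧
    -- A-linear,
    (∀ f σ, FixesTorsion ψ M σ → ∀ i,
      (c f σ (α i) : AlgebraicClosure (RatFunc Fq)) - (α i : AlgebraicClosure (RatFunc Fq))
        = ψ f ((σ (α i) : AlgebraicClosure (RatFunc Fq))
            - (α i : AlgebraicClosure (RatFunc Fq)))) ∧
    -- and a bijection from H_Γ(M) onto Λ_M × ⋯ × Λ_M (r copies)
    Set.BijOn
      (fun σ : ↥E ≃ₐ[RatFunc Fq] ↥E =>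
        fun i => (σ (α i) : AlgebraicClosure (RatFunc Fq))
          - (α i : AlgebraicClosure (RatFunc Fq)))
      {σ | FixesTorsion ψ M σ}
      {v : Fin r → AlgebraicClosure (RatFunc Fq) | ∀ i, ψ M (v i) = 0} := by
  
  classical
  have hM0 : M ≠ 0 := by rintro rfl; simp at hM
  have hv := CarlitzAux.exists_v hq
  simp only [CarlitzAux.psi_eq hψ] at *
  have hadj : ∀ x : AlgebraicClosure (RatFunc Fq),
      CarlitzAux.carl (AlgebraicClosure (RatFunc Fq)) M x ∈ Γ →
      ∃ g : Fin r → Polynomial Fq, CarlitzAux.carl (AlgebraicClosure (RatFunc Fq)) M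
        (x - ∑ i, CarlitzAux.carl (AlgebraicClosure (RatFunc Fq)) (g i) (α i)) = 0 := by
    intro x hx
    obtain ⟨g, hg⟩ := hgen _ hx
    refine ⟨g, ?_⟩
    rw [map_sub, hg, map_sum, ← Finset.sum_sub_distrib]
    refine Finset.sum_eq_zero (fun i _ => ?_)
    rw [CarlitzAux.carl_comm, hα, sub_self]
  have hEtor : ∀ x : AlgebraicClosure (RatFunc Fq),
      CarlitzAux.carl (AlgebraicClosure (RatFunc Fq)) M x = 0 → x ∈ E := by
    intro x hx
    rw [hE]
    refine subset_adjoin _ _ ?_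
    show CarlitzAux.carl (AlgebraicClosure (RatFunc Fq)) M x ∈ Γ
    rw [hx]
    exact Γ.zero_mem
  have hle : ∀ E' : IntermediateField (RatFunc Fq) (AlgebraicClosure (RatFunc Fq)),
      (∀ x, CarlitzAux.carl (AlgebraicClosure (RatFunc Fq)) M x = 0 → x ∈ E') →
      (∀ i, (α i : AlgebraicClosure (RatFunc Fq)) ∈ E') → E ≤ E' := by
    intro E' h1 h2
    rw [hE, adjoin_le_iff]
    intro x hx
    obtain ⟨g, hg⟩ := hadj x hx
    have h3 := E'.add_mem (h1 _ hg)
      (sum_mem (t := Finset.univ) (fun i _ => CarlitzAux.carl_mem E' (g i) (h2 i)))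
    simpa using h3
  have hGal : IsGalois (RatFunc Fq) E := by
    rw [hE]
    exact CarlitzAux.galois_adjoin hM0 Γ hΓk
  have hFin : FiniteDimensional (RatFunc Fq) E := by
    let Z : Set (AlgebraicClosure (RatFunc Fq)) :=
      {x | CarlitzAux.carl (AlgebraicClosure (RatFunc Fq)) M x = 0} ∪
        Set.range (fun i => (α i : AlgebraicClosure (RatFunc Fq)))
    have hZf : Z.Finite := (CarlitzAux.torsion_finite hM0).union (Set.finite_range _)
    have : Finite Z := hZf
    have hZ : FiniteDimensional (RatFunc Fq) (adjoin (RatFunc Fq) Z) :=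
      finiteDimensional_adjoin (fun x _ => (Algebra.IsAlgebraic.isAlgebraic x).isIntegral)
    have hEZ : E ≤ adjoin (RatFunc Fq) Z :=
      hle _ (fun x hx => subset_adjoin _ _ (Or.inl hx))
        (fun i => subset_adjoin _ _ (Or.inr ⟨i, rfl⟩))
    exact Module.Finite.of_injective (inclusion hEZ).toLinearMap (inclusion hEZ).injective
  have hcoe : ∀ x : E, CarlitzAux.carl E M x = 0 ↔
      CarlitzAux.carl (AlgebraicClosure (RatFunc Fq)) M (x : AlgebraicClosure (RatFunc Fq)) = 0 := by
    intro x
    rw [← CarlitzAux.coe_carl]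
    exact (ZeroMemClass.coe_eq_zero).symm
  have hFix : ∀ σ : E ≃ₐ[RatFunc Fq] E, FixesTorsion ψ M σ ↔ CarlitzAux.Fix M σ := by
    intro σ
    unfold FixesTorsion CarlitzAux.Fix
    refine forall_congr' (fun x => ?_)
    rw [hcoe, CarlitzAux.psi_eq hψ]
  choose a' ha' using fun i => hΓk _ (haΓ i)
  have hα' : ∀ i, CarlitzAux.carl E M (α i) = algebraMap (RatFunc Fq) E (a' i) := by
    intro i
    apply Subtype.ext
    rw [CarlitzAux.coe_carl, hα, ← ha']
    rfl
  refine ⟨?_, ?_, ?_, ?_, ?_⟩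
  · intro σ τ hσ _ i
    have h := CarlitzAux.phi_mul (hα' i) ((hFix σ).1 hσ) τ
    have h2 := congrArg (fun z : E => (z : AlgebraicClosure (RatFunc Fq))) h
    simpa using h2
  · intro f σ hσ i
    obtain ⟨g, hg1, hg2⟩ := CarlitzAux.exists_units hM0 hv f
    obtain ⟨s, hs⟩ := CarlitzAux.exists_sigma (L := E) (RatFunc Fq) hM0 g hg1
    obtain ⟨t, ht⟩ := CarlitzAux.exists_sigma (L := E) (RatFunc Fq) hM0 _ hg2
    have hσ' := (hFix σ).1 hσ
    have hext : ∀ (s : E ≃ₐ[RatFunc Fq] E) (B : Polynomial Fq),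
        (∀ x : E, CarlitzAux.carl E M x = 0 → s x = CarlitzAux.carl E B x) →
        ExtendsSigma ψ M s B := by
      intro s B h x hx
      rw [CarlitzAux.psi_eq hψ] at hx ⊢
      rw [h x ((hcoe x).2 hx), CarlitzAux.coe_carl]
    have h1 := hc f σ hσ 2 ![g, f - g] (by
        intro i
        fin_cases i
        · exact hg1
        · exact hg2) (by simp) ![s, t] (by
        intro i
        fin_cases i
        · exact hext s g hs
        · exact hext t (f - g) ht)
    have h2 : c f σ = (s * σ * s⁻¹) * (t * σ * t⁻¹) := by
      rw [h1]
      simp [List.ofFn_succ]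
    have h3 : c f σ (α i) - α i = CarlitzAux.carl E f (σ (α i) - α i) := by
      rw [h2, CarlitzAux.phi_mul (hα' i) (CarlitzAux.fix_conj hσ'),
        CarlitzAux.phi_conj (hα' i) hσ' hs, CarlitzAux.phi_conj (hα' i) hσ' ht,
        ← CarlitzAux.carl_add]
      congr 2
      ring
    have h4 := congrArg (fun z : E => (z : AlgebraicClosure (RatFunc Fq))) h3
    simp only [CarlitzAux.coe_carl] at h4
    simpa using h4
  · intro σ _ i
    have h := (hcoe _).1 (CarlitzAux.phi_torsion (hα' i) σ)
    simpa using h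
  · intro σ hσ τ hτ hst
    have hσ' := (hFix σ).1 hσ
    have hτ' := (hFix τ).1 hτ
    let E' : IntermediateField (RatFunc Fq) (AlgebraicClosure (RatFunc Fq)) :=
      (AlgHom.equalizer (E.val.comp σ.toAlgHom) (E.val.comp τ.toAlgHom)).map E.val |>.toIntermediateField (by
        rintro _ ⟨x, hx, rfl⟩
        refine ⟨x⁻¹, ?_, by simp⟩
        have hx' : E.val (σ x) = E.val (τ x) := hx
        show E.val (σ x⁻¹) = E.val (τ x⁻¹)
        rw [map_inv₀, map_inv₀, map_inv₀, map_inv₀, hx'])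
    have hEE' : E ≤ E' := by
      refine hle E' (fun x hx => ?_) (fun i => ?_)
      · refine ⟨⟨x, hEtor x hx⟩, ?_, rfl⟩
        have hx' := (hcoe ⟨x, hEtor x hx⟩).2 hx
        show E.val (σ _) = E.val (τ _)
        rw [hσ' _ hx', hτ' _ hx']
      · refine ⟨α i, ?_, rfl⟩
        have := congrFun hst i
        simp only [sub_left_inj] at this
        exact this
    ext x
    obtain ⟨y, hy, hxy⟩ := hEE' x.2
    have : y = x := Subtype.ext hxy
    subst this
    exact hy
  · intro v hvt
    obtain ⟨l, hl1, hl2⟩ := CarlitzAux.exists_gen (L := AlgebraicClosure (RatFunc Fq))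
      (fun N hN => CarlitzAux.algMap_ne hN) M hM0
    have hlE : l ∈ E := hEtor l ((hl1 M).2 dvd_rfl)
    have hvt' : ∀ i, CarlitzAux.carl (AlgebraicClosure (RatFunc Fq)) M (v i) = 0 := hvt
    obtain ⟨σ, h1, h2⟩ := CarlitzAux.core_surj (K := RatFunc Fq) (L := E) hM0 hv hα' (by
        intro g y hy
        have hy' := congrArg (fun z : E => (z : AlgebraicClosure (RatFunc Fq))) hy
        simp only [CarlitzAux.coe_carl, AddSubmonoidClass.coe_finsetSum] at hy'
        have hy2 : CarlitzAux.carl (AlgebraicClosure (RatFunc Fq)) M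
            (algebraMap (RatFunc Fq) (AlgebraicClosure (RatFunc Fq)) y) =
            ∑ i, CarlitzAux.carl (AlgebraicClosure (RatFunc Fq)) (g i) (a i) := by
          simp only [← ha']
          exact hy'
        have hyΓ : CarlitzAux.carl (AlgebraicClosure (RatFunc Fq)) M
            (algebraMap (RatFunc Fq) (AlgebraicClosure (RatFunc Fq)) y) ∈ Γ := by
          rw [hy2]
          exact sum_mem (fun i _ => hΓA _ _ (haΓ i))
        have h3 := heΓ _ ⟨y, rfl⟩ hyΓ
        obtain ⟨p, q, hpq⟩ := hcop
        have h4 : algebraMap (RatFunc Fq) (AlgebraicClosure (RatFunc Fq)) y ∈ Γ := by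
          rw [← CarlitzAux.carl_one (F := Fq) (algebraMap (RatFunc Fq) _ y), ← hpq,
            CarlitzAux.carl_add, CarlitzAux.carl_mul, CarlitzAux.carl_mul]
          exact Γ.add_mem (hΓA _ _ h3) (hΓA _ _ hyΓ)
        obtain ⟨h, hh⟩ := hgen _ h4
        have h5 := hind (fun i => g i - M * h i) (by
          simp only [CarlitzAux.carl_sub, CarlitzAux.carl_mul]
          rw [Finset.sum_sub_distrib, ← hy2, ← map_sum, ← hh, sub_self])
        exact fun i => ⟨h i, sub_eq_zero.1 (h5 i)⟩)
      (l := ⟨l, hlE⟩) (by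
        intro f
        rw [← hl1 f, ← ZeroMemClass.coe_eq_zero (S' := E), CarlitzAux.coe_carl])
      (by
        intro y hy
        obtain ⟨f, hf⟩ := hl2 _ ((hcoe y).1 hy)
        exact ⟨f, Subtype.ext (by rw [hf, CarlitzAux.coe_carl])⟩)
      (fun i => ⟨v i, hEtor _ (hvt' i)⟩) (fun i => (hcoe _).2 (hvt' i))
    refine ⟨σ, (hFix σ).2 h1, ?_⟩
    funext i
    have := congrArg (fun z : E => (z : AlgebraicClosure (RatFunc Fq))) (h2 i)
    simpa using this
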